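/- Let (Ω, P) be a probability space, let f : Finset E → ℝ be normalized, monotone and submodular, let e₁, …, e_m be distinct elements of E with D := {e₁, …, e_m}, let 0 ≤ p ≤ 1, and let T : Ω → Finset E be a random finset such that T(ω) ⊆ D for every ω, the event {e_i ∈ T} is measurable for each i, and P(e_i ∈ T) ≥ p for every 1 ≤ i ≤ m. Then E[f(T)] ≥ p · f(D). -/

import Mathlib

open Finset MeasureTheory

/-!
Enlarge `D` one element at a time. By submodularity, passing from `D` to `D ∪ {a}` raises
`f (T ∩ D)` by at least `f (D ∪ {a}) - f D` on the event `a ∈ T`, and leaves it unchanged off that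
event. Hence its expectation grows by at least `P (a ∈ T)` times this gain, which is non-negative by
monotonicity and so at least `p` times the gain; the gains telescope.
-/

section

variable {E Ω G F : Type*} [DecidableEq E]

/-- The marginal gain `f(a | X)` of adding the element `a` to the set `X`. -/
def marginalGain [Sub G] (f : Finset E → G) (X : Finset E) (a : E) : G :=
  f (insert a X) - f X

/-- Submodularity of a set function, in its diminishing-returns form: the gain of adding a new
element can only shrink when the set grows. -/
def IsSubmodular [Sub G] [LE G] (f : Finset E → G) : Prop :=
  ∀ X Y : Finset E, X ⊆ Y → ∀ a ∉ Y, marginalGain f Y a ≤ marginalGain f X a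

lemma marginalGain_nonneg [AddCommGroup G] [PartialOrder G] [IsOrderedAddMonoid G]
    {f : Finset E → G} (hf : Monotone f) (X : Finset E) (a : E) : 0 ≤ marginalGain f X a :=
  sub_nonneg.2 (hf (subset_insert a X))

lemma IsSubmodular.add_ite_marginalGain_le [AddCommGroup G] [PartialOrder G] [IsOrderedAddMonoid G]
    {f : Finset E → G} (hf : IsSubmodular f) {D : Finset E} {a : E} (ha : a ∉ D) (S : Finset E) :
    f (S ∩ D) + (if a ∈ S then marginalGain f D a else 0) ≤ f (S ∩ insert a D) := by
  split_ifs with haS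
  · rw [inter_insert_of_mem haS]
    exact le_sub_iff_add_le'.1 (hf _ _ inter_subset_right a ha)
  · rw [inter_insert_of_notMem haS, add_zero]

variable [MeasurableSpace Ω] {P : Measure Ω} [IsFiniteMeasure P] {T : Ω → Finset E}

lemma integrable_comp_inter [NormedAddCommGroup F] (f : Finset E → F) {D : Finset E}
    (hT : ∀ d ∈ D, MeasurableSet {ω | d ∈ T ω}) : Integrable (fun ω ↦ f (T ω ∩ D)) P := by
  induction D using Finset.induction_on generalizing f with
  | empty => simp only [inter_empty, integrable_const]
  | insert a D _ ih =>
    rw [forall_mem_insert] at hT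
    classical
    have split_on_a : (fun ω ↦ f (T ω ∩ insert a D)) =
        {ω | a ∈ T ω}.piecewise (fun ω ↦ f (insert a (T ω ∩ D))) (fun ω ↦ f (T ω ∩ D)) := by
      ext ω
      by_cases ha : a ∈ T ω <;> simp [Set.piecewise, ha]
    rw [split_on_a]
    exact Integrable.piecewise hT.1 (ih (fun S ↦ f (insert a S)) hT.2).integrableOn
      (ih f hT.2).integrableOn

lemma IsSubmodular.integral_add_marginalGain_le {f : Finset E → ℝ} (hf : IsSubmodular f)
    {D : Finset E} {a : E} (ha : a ∉ D) (hT : ∀ d ∈ insert a D, MeasurableSet {ω | d ∈ T ω}) :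
    ∫ ω, f (T ω ∩ D) ∂P + P.real {ω | a ∈ T ω} * marginalGain f D a ≤
      ∫ ω, f (T ω ∩ insert a D) ∂P := by
  have hTa : MeasurableSet {ω | a ∈ T ω} := hT a (mem_insert_self a D)
  have integrable_D : Integrable (fun ω ↦ f (T ω ∩ D)) P :=
    integrable_comp_inter f fun d hd ↦ hT d (mem_insert_of_mem hd)
  have integrable_gain :
      Integrable ({ω | a ∈ T ω}.indicator fun _ ↦ marginalGain f D a) P :=
    (integrable_const _).indicator hTa
  rw [← smul_eq_mul, ← integral_indicator_const _ hTa, ← integral_add integrable_D integrable_gain]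
  refine integral_mono (integrable_D.add integrable_gain) (integrable_comp_inter f hT) fun ω ↦ ?_
  simpa only [Set.indicator_apply, Set.mem_ofPred_eq] using hf.add_ite_marginalGain_le ha (T ω)

theorem stmt_17_general {f : Finset E → ℝ} (hmono : Monotone f) (hsubmod : IsSubmodular f)
    {D : Finset E} {p : ℝ} (hmeas : ∀ d ∈ D, MeasurableSet {ω | d ∈ T ω})
    (hprob : ∀ d ∈ D, p ≤ P.real {ω | d ∈ T ω}) :
    p * (f D - f ∅) ≤ ∫ ω, (f (T ω ∩ D) - f ∅) ∂P := by
  rw [integral_sub (integrable_comp_inter f hmeas) (integrable_const _)]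
  induction D using Finset.induction_on with
  | empty => simp
  | insert a D ha ih =>
    have hD := ih (fun d hd ↦ hmeas d (mem_insert_of_mem hd))
      fun d hd ↦ hprob d (mem_insert_of_mem hd)
    calc p * (f (insert a D) - f ∅)
        = p * (f D - f ∅) + p * marginalGain f D a := by rw [marginalGain]; ring
      _ ≤ (∫ ω, f (T ω ∩ D) ∂P - ∫ _, f ∅ ∂P) + P.real {ω | a ∈ T ω} * marginalGain f D a :=
          add_le_add hD (mul_le_mul_of_nonneg_right (hprob a (mem_insert_self a D))
            (marginalGain_nonneg hmono D a))
      _ ≤ ∫ ω, f (T ω ∩ insert a D) ∂P - ∫ _, f ∅ ∂P := by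
          linarith [hsubmod.integral_add_marginalGain_le (P := P) ha hmeas]

end

/-- Expectation bound: if each element of `D` belongs to the random set `T`
with probability at least `p`, then `E[f(T)] ≥ p · f(D)`. -/
theorem stmt_17 {E : Type*} [DecidableEq E]
    {Ω : Type*} [MeasurableSpace Ω]
    (P : Measure Ω) [IsProbabilityMeasure P]
    (f : Finset E → ℝ)
    (hnorm : f ∅ = 0)
    (hmono : ∀ X Y : Finset E, X ⊆ Y → f X ≤ f Y)
    (hsubmod : ∀ X Y : Finset E, X ⊆ Y → ∀ e ∉ Y,
      f (insert e Y) - f Y ≤ f (insert e X) - f X)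
    (m : ℕ) (e : ℕ → E) (hinj : Set.InjOn e (Set.Iio m))
    (p : ℝ) (hp0 : 0 ≤ p) (hp1 : p ≤ 1)
    (T : Ω → Finset E)
    (hTD : ∀ ω, T ω ⊆ (Finset.range m).image e)
    (hmeas : ∀ i < m, MeasurableSet {ω | e i ∈ T ω})
    (hprob : ∀ i < m, ENNReal.ofReal p ≤ P {ω | e i ∈ T ω}) :
    p * f ((Finset.range m).image e) ≤ ∫ ω, f (T ω) ∂P := by
  simpa only [hnorm, sub_zero, inter_eq_left.2 (hTD _)] using
    stmt_17_general (P := P) (f := f) (D := (range m).image e) (fun X Y ↦ hmono X Y) hsubmod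
      (forall_mem_image.2 fun i hi ↦ hmeas i (mem_range.1 hi))
      (forall_mem_image.2 fun i hi ↦
        (ENNReal.ofReal_le_iff_le_toReal (measure_ne_top P _)).1 (hprob i (mem_range.1 hi)))
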